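/- For every w ∈ ℕ, ∫_{-1}^{1} P_w(x) W_{p,n}(x) P_w(x)^T dx equals the diagonal matrix [√π · 2^{⌊w/2⌋} · Γ(n/2 + 1 + ⌊w/2⌋) · ∏_{k=0}^{⌊(w-1)/2⌋}(n+2k+1)] / [w! (n+1)(n+2w+1) Γ(n/2 + 3/2)] · diag( p(n-p+w+1)/(p+w), (n-p)(p+w+1)/(n-p+w) ). In particular this matrix is diagonal and positive definite. -/

import Mathlib

open Matrix

/-- Pochhammer symbol `(a)_k = a (a+1) ⋯ (a+k-1)`. -/
noncomputable def poch (a : ℝ) (k : ℕ) : ℝ := ∏ i ∈ Finset.range k, (a + i)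

/-- Gegenbauer polynomial `C_w^λ(x)`, with the convention `C_w^λ = 0` for `w < 0`. -/
noncomputable def geg (l : ℝ) (w : ℤ) (x : ℝ) : ℝ :=
  if w < 0 then 0 else
    poch (2 * l) w.toNat / (w.toNat.factorial : ℝ) *
      ∑ k ∈ Finset.range (w.toNat + 1),
        (poch (-(w.toNat : ℝ)) k * poch ((w.toNat : ℝ) + 2 * l) k) /
            (poch (l + 1 / 2) k * (k.factorial : ℝ)) * ((1 - x) / 2) ^ k

/-- The weight matrix `W_{p,n}(x)`. -/
noncomputable def Wmat (n : ℕ) (p : ℝ) (x : ℝ) : Matrix (Fin 2) (Fin 2) ℝ :=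
  (1 - x ^ 2) ^ ((n : ℝ) / 2 - 1) •
    !![p * x ^ 2 + (n : ℝ) - p, -(n : ℝ) * x; -(n : ℝ) * x, ((n : ℝ) - p) * x ^ 2 + p]

/-- The matrix valued polynomial `P_w`. -/
noncomputable def Pmat (n : ℕ) (p : ℝ) (w : ℕ) (x : ℝ) : Matrix (Fin 2) (Fin 2) ℝ :=
  !![1 / ((n : ℝ) + 1) * geg (((n : ℝ) + 1) / 2) (w : ℤ) x +
        1 / (p + w) * geg (((n : ℝ) + 3) / 2) ((w : ℤ) - 2) x,
      1 / (p + w) * geg (((n : ℝ) + 3) / 2) ((w : ℤ) - 1) x;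
      1 / ((n : ℝ) - p + w) * geg (((n : ℝ) + 3) / 2) ((w : ℤ) - 1) x,
      1 / ((n : ℝ) + 1) * geg (((n : ℝ) + 1) / 2) (w : ℤ) x +
        1 / ((n : ℝ) - p + w) * geg (((n : ℝ) + 3) / 2) ((w : ℤ) - 2) x]

lemma poch_zero (a : ℝ) : poch a 0 = 1 := by simp [poch]

lemma poch_succ (a : ℝ) (k : ℕ) : poch a (k + 1) = poch a k * (a + k) := by
  simp [poch, Finset.prod_range_succ]

lemma poch_succ' (a : ℝ) (k : ℕ) : poch a (k + 1) = a * poch (a + 1) k := by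
  simp only [poch, Finset.prod_range_succ']
  rw [mul_comm]
  congr 1
  · simp
  · apply Finset.prod_congr rfl
    intro i _
    push_cast
    ring

lemma poch_add (a : ℝ) (w k : ℕ) : poch a w * poch (w + a) k = poch a (w + k) := by
  simp only [poch, Finset.prod_range_add]
  congr 1
  apply Finset.prod_congr rfl
  intro i _
  push_cast
  ring

lemma poch_pos (a : ℝ) (ha : 0 < a) (k : ℕ) : 0 < poch a k := by
  unfold poch
  exact Finset.prod_pos fun i _ => by positivity

lemma poch_neg_zero (w k : ℕ) (h : w < k) : poch (-(w : ℝ)) k = 0 := by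
  unfold poch
  exact Finset.prod_eq_zero (Finset.mem_range.2 h) (by simp)

/-- coefficients of the Gegenbauer polynomial -/
noncomputable def cf (l : ℝ) (w k : ℕ) : ℝ :=
  poch (2 * l) (w + k) * poch (-(w : ℝ)) k / ((w.factorial : ℝ) * (poch (l + 1 / 2) k * k.factorial))

lemma geg_eq_sum (l : ℝ) (w N : ℕ) (h : w < N) (x : ℝ) :
    geg l (w : ℤ) x = ∑ k ∈ Finset.range N, cf l w k * ((1 - x) / 2) ^ k := by
  have h1 : geg l (w : ℤ) x = ∑ k ∈ Finset.range (w + 1), cf l w k * ((1 - x) / 2) ^ k := by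
    unfold geg
    rw [if_neg (by omega), Int.toNat_natCast, Finset.mul_sum]
    apply Finset.sum_congr rfl
    intro k _
    unfold cf
    rw [← poch_add]
    field_simp
  rw [h1]
  apply Finset.sum_subset
  · intro k hk
    simp at hk ⊢
    omega
  · intro k _ hk
    have : w < k := by simp at hk; omega
    simp [cf, poch_neg_zero w k this]

lemma cf_rec_zero (l : ℝ) (w : ℕ) :
    ((w : ℝ) + 2) * cf l (w + 2) 0 = 2 * (w + 1 + l) * cf l (w + 1) 0 - (w + 2 * l) * cf l w 0 := by
  simp only [cf, poch_zero, add_zero, Nat.factorial, poch_succ]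
  have : (w.factorial : ℝ) ≠ 0 := by positivity
  have h1 : (w : ℝ) + 1 ≠ 0 := by positivity
  have h2 : (w : ℝ) + 1 + 1 ≠ 0 := by positivity
  push_cast
  field_simp
  ring

lemma cf_rec_succ (l : ℝ) (hl : 0 < l) (w j : ℕ) :
    ((w : ℝ) + 2) * cf l (w + 2) (j + 1) = 2 * (w + 1 + l) *
      (cf l (w + 1) (j + 1) - 2 * cf l (w + 1) j) - (w + 2 * l) * cf l w (j + 1) := by
  have e1 : poch (-((w + 2 : ℕ) : ℝ)) (j + 1) = -(w + 2) * poch (-((w + 1 : ℕ) : ℝ)) j := by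
    have : -((w + 2 : ℕ) : ℝ) + 1 = -((w + 1 : ℕ) : ℝ) := by push_cast; ring
    rw [poch_succ', this]
    push_cast
    ring
  have e2 : poch (-((w + 1 : ℕ) : ℝ)) (j + 1) = poch (-((w + 1 : ℕ) : ℝ)) j * (j - w - 1) := by
    rw [poch_succ]; push_cast; ring
  have h1 : (w : ℝ) + 1 ≠ 0 := by positivity
  have h2 : (w : ℝ) + 1 + 1 ≠ 0 := by positivity
  have e3 : poch (-(w : ℝ)) (j + 1) =
      - (poch (-((w + 1 : ℕ) : ℝ)) j * (j - w - 1) * (j - w) / (w + 1)) := by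
    have : poch (-((w + 1 : ℕ) : ℝ)) (j + 1 + 1) = -(w + 1) * poch (-(w : ℝ)) (j + 1) := by
      have : -((w + 1 : ℕ) : ℝ) + 1 = -(w : ℝ) := by push_cast; ring
      rw [poch_succ', this]
      push_cast
      ring
    rw [poch_succ, e2] at this
    push_cast at this ⊢
    field_simp
    linear_combination this
  have i1 : w + 2 + (j + 1) = w + j + 1 + 1 + 1 := by ring
  have i2 : w + 1 + (j + 1) = w + j + 1 + 1 := by ring
  have i3 : w + 1 + j = w + j + 1 := by ring
  have i4 : w + (j + 1) = w + j + 1 := by ring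
  have hp := (poch_pos (l + 1 / 2) (by positivity) j).ne'
  have hf : (w.factorial : ℝ) ≠ 0 := by positivity
  have hj : (j.factorial : ℝ) ≠ 0 := by positivity
  have hj1 : (j : ℝ) + 1 ≠ 0 := by positivity
  have hl' : l + 1 / 2 + j ≠ 0 := by positivity
  unfold cf
  rw [e1, e2, e3, i1, i2, i3, i4, poch_succ (l + 1 / 2), poch_succ (2 * l) (w + j + 1 + 1),
    poch_succ (2 * l) (w + j + 1)]
  generalize poch (-((w + 1 : ℕ) : ℝ)) j = Q
  generalize poch (2 * l) (w + j + 1) = R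
  generalize poch (l + 1 / 2) j = T at *
  simp only [Nat.factorial]
  push_cast
  generalize (w.factorial : ℝ) = F at *
  generalize (j.factorial : ℝ) = K at *
  field_simp
  ring

lemma geg_rec (l : ℝ) (hl : 0 < l) (w : ℕ) (x : ℝ) :
    ((w : ℝ) + 2) * geg l ((w + 2 : ℕ) : ℤ) x = 2 * (w + 1 + l) * x * geg l ((w + 1 : ℕ) : ℤ) x
      - (w + 2 * l) * geg l (w : ℤ) x := by
  rw [geg_eq_sum l (w + 2) (w + 3) (by omega), geg_eq_sum l (w) (w + 3) (by omega)]
  have hx : x = 1 - 2 * ((1 - x) / 2) := by ring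
  have h2 : x * geg l ((w + 1 : ℕ) : ℤ) x =
      (∑ k ∈ Finset.range (w + 3), cf l (w + 1) k * ((1 - x) / 2) ^ k)
      - 2 * ∑ k ∈ Finset.range (w + 2), cf l (w + 1) k * ((1 - x) / 2) ^ (k + 1) := by
    have : x * geg l ((w + 1 : ℕ) : ℤ) x = geg l ((w + 1 : ℕ) : ℤ) x
      - 2 * (((1 - x) / 2) * geg l ((w + 1 : ℕ) : ℤ) x) := by ring
    rw [this]
    congr 1
    · exact geg_eq_sum l (w + 1) (w + 3) (by omega) x
    · rw [geg_eq_sum l (w + 1) (w + 2) (by omega), Finset.mul_sum]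
      congr 1
      apply Finset.sum_congr rfl
      intro k _
      ring
  rw [mul_assoc _ x, h2]
  simp only [Finset.sum_range_succ' _ (w + 2)]
  have : ∀ k ∈ Finset.range (w + 2), ((w : ℝ) + 2) * (cf l (w + 2) (k + 1) * ((1 - x) / 2) ^ (k + 1)) =
     2 * (w + 1 + l) * (cf l (w + 1) (k + 1) * ((1 - x) / 2) ^ (k + 1)) -
     2 * (w + 1 + l) * 2 * (cf l (w + 1) k * ((1 - x) / 2) ^ (k + 1))
      - (w + 2 * l) * (cf l w (k + 1) * ((1 - x) / 2) ^ (k + 1)) := by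
    intro k _
    linear_combination ((1 - x) / 2) ^ (k + 1) * cf_rec_succ l hl w k
  have := Finset.sum_congr rfl this
  rw [Finset.sum_sub_distrib, Finset.sum_sub_distrib, ← Finset.mul_sum, ← Finset.mul_sum,
    ← Finset.mul_sum, ← Finset.mul_sum] at this
  linear_combination this + cf_rec_zero l w

/-- shifted Gegenbauer polynomials, `S l (w+1) = C_w`, `S l 0 = 0`. -/
noncomputable def S (l : ℝ) : ℕ → ℝ → ℝ
  | 0, _ => 0
  | 1, _ => 1
  | (k + 2), x => (2 * (k + l) * x * S l (k + 1) x - (k + 2 * l - 1) * S l k x) / (k + 1)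

lemma S_rec (l : ℝ) (k : ℕ) (x : ℝ) : ((k : ℝ) + 1) * S l (k + 2) x =
    2 * (k + l) * x * S l (k + 1) x - (k + 2 * l - 1) * S l k x := by
  have : (k : ℝ) + 1 ≠ 0 := by positivity
  rw [S]
  field_simp

lemma geg_eq_S (l : ℝ) (hl : 0 < l) (w : ℕ) (x : ℝ) :
    geg l (w : ℤ) x = S l (w + 1) x ∧ geg l ((w + 1 : ℕ) : ℤ) x = S l (w + 2) x := by
  induction w with
  | zero =>
    constructor
    · rw [geg_eq_sum l 0 1 (by omega)]
      simp [cf, poch, S]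
    · rw [geg_eq_sum l 1 2 (by omega)]
      simp [cf, poch, S, Finset.sum_range_succ, Finset.prod_range_succ]
      field_simp
      ring
  | succ w ih =>
    refine ⟨ih.2, ?_⟩
    have h := geg_rec l hl w x
    have h' := S_rec l (w + 1) x
    rw [ih.1, ih.2] at h
    push_cast at h' h ⊢
    have h2 : (w : ℝ) + 2 ≠ 0 := by positivity
    apply mul_left_cancel₀ h2
    have e : (w : ℤ) + 1 + 1 = w + 2 := by ring
    rw [e, h]
    linear_combination -h'

lemma geg_sub_one (l : ℝ) (hl : 0 < l) (w : ℕ) (x : ℝ) : geg l ((w : ℤ) - 1) x = S l w x := by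
  cases w with
  | zero => simp [geg, S]
  | succ w =>
    have := (geg_eq_S l hl w x).1
    push_cast
    rw [add_sub_cancel_right, this]

lemma S_id (l : ℝ) (w : ℕ) (x : ℝ) :
    2 * l * (x * S (l + 1) (w + 1) x - S (l + 1) w x) = (w + 1) * S l (w + 2) x ∧
    2 * l * (S (l + 1) (w + 1) x - x * S (l + 1) w x) = (w + 2 * l) * S l (w + 1) x := by
  induction w with
  | zero => simp [S]
  | succ w ih =>
    obtain ⟨h3, h4⟩ := ih
    have r1 := S_rec (l + 1) w x
    have r2 := S_rec l (w + 1) x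
    have h1 : (w : ℝ) + 1 ≠ 0 := by positivity
    have g4 : 2 * l * (S (l + 1) (w + 2) x - x * S (l + 1) (w + 1) x) =
        (w + 1 + 2 * l) * S l (w + 2) x := by
      apply mul_left_cancel₀ h1
      linear_combination 2 * l * r1 + (w + 1 + 2 * l) * h3
    push_cast at r2 ⊢
    refine ⟨?_, g4⟩
    show 2 * l * (x * S (l + 1) (w + 2) x - S (l + 1) (w + 1) x) = (w + 1 + 1) * S l (w + 3) x
    have r2' : ((w : ℝ) + 1 + 1) * S l (w + 3) x = 2 * (w + 1 + l) * x * S l (w + 2) x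
      - (w + 1 + 2 * l - 1) * S l (w + 1) x := r2
    linear_combination x * g4 - h4 + x * h3 - r2'

lemma S_hasDeriv (l : ℝ) (w : ℕ) (x : ℝ) :
    HasDerivAt (S l w) (2 * l * S (l + 1) (w - 1) x) x ∧
    HasDerivAt (S l (w + 1)) (2 * l * S (l + 1) w x) x := by
  induction w with
  | zero =>
    have e0 : S l 0 = fun _ => 0 := by funext y; simp [S]
    have e1 : S l 1 = fun _ => 1 := by funext y; simp [S]
    have e2 : S (l + 1) 0 x = 0 := by simp [S]
    simp only [zero_add, Nat.zero_sub]
    rw [e0, e1, e2, mul_zero]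
    exact ⟨hasDerivAt_const _ _, hasDerivAt_const _ _⟩
  | succ w ih =>
    refine ⟨ih.2, ?_⟩
    have e : S l (w + 1 + 1) = fun y =>
      (2 * (w + l) * y * S l (w + 1) y - (w + 2 * l - 1) * S l w y) / (w + 1) := by
      funext y; rw [S]
    rw [e]
    have := (((((hasDerivAt_id x).const_mul (2 * (w + l))).mul ih.2).sub
      (ih.1.const_mul (w + 2 * l - 1))).div_const ((w : ℝ) + 1))
    refine this.congr_deriv ?_
    have h1 : (w : ℝ) + 1 ≠ 0 := by positivity
    rw [div_eq_iff h1]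
    simp only [id]
    cases w with
    | zero => simp [S]
    | succ v =>
      obtain ⟨h3, h4⟩ := S_id l v x
      obtain ⟨g3, g4⟩ := S_id l (v + 1) x
      simp only [Nat.add_sub_cancel]
      push_cast at *
      have g4' : 2 * l * (S (l + 1) (v + 2) x - x * S (l + 1) (v + 1) x) =
        (v + 1 + 2 * l) * S l (v + 2) x := g4
      show _ = 2 * l * S (l + 1) (v + 2) x * (v + 1 + 1)
      show 2 * (v + 1 + l) * 1 * S l (v + 2) x + 2 * (v + 1 + l) * x * (2 * l * S (l + 1) (v + 1) x)
        - (v + 1 + 2 * l - 1) * (2 * l * S (l + 1) v x) = _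
      linear_combination (v + 2 * l) * h3 - (v + 2) * g4'

lemma S_parity (l : ℝ) (w : ℕ) (x : ℝ) :
    S l w (-x) = -(-1) ^ w * S l w x ∧ S l (w + 1) (-x) = (-1) ^ w * S l (w + 1) x := by
  induction w with
  | zero => simp [S]
  | succ w ih =>
    refine ⟨by rw [ih.2, pow_succ]; ring, ?_⟩
    have h1 : (w : ℝ) + 1 ≠ 0 := by positivity
    apply mul_left_cancel₀ h1
    have a := S_rec l w (-x)
    have b := S_rec l w x
    rw [ih.1, ih.2] at a
    show (w + 1 : ℝ) * S l (w + 2) (-x) = (w + 1) * ((-1) ^ (w + 1) * S l (w + 2) x)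
    rw [a, pow_succ]
    linear_combination (-1) ^ w * b

lemma S_cont (l : ℝ) (w : ℕ) : Continuous (S l w) :=
  continuous_iff_continuousAt.2 fun x => (S_hasDeriv l w x).1.continuousAt

/-- The two structure relations in the form needed -/
lemma S_ode (l : ℝ) (w : ℕ) (x : ℝ) :
    (1 - x ^ 2) * (2 * l * S (l + 1) w x) = (w + 2 * l - 1) * S l w x - w * x * S l (w + 1) x ∧
    (1 - x ^ 2) * (2 * l * S (l + 1) w x) = (w + 2 * l) * x * S l (w + 1) x
      - (w + 1) * S l (w + 2) x := by
  have : (1 - x ^ 2) * (2 * l * S (l + 1) w x) = (w + 2 * l) * x * S l (w + 1) x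
      - (w + 1) * S l (w + 2) x := by
    obtain ⟨h3, h4⟩ := S_id l w x
    linear_combination x * h4 - h3
  refine ⟨?_, this⟩
  rw [this]
  linear_combination - S_rec l w x

lemma geg_id (l : ℝ) (hl : 0 < l) (w : ℕ) (x : ℝ) :
    2 * l * (x * geg (l + 1) ((w : ℤ) - 1) x - geg (l + 1) ((w : ℤ) - 2) x) = w * S l (w + 1) x ∧
    2 * l * (geg (l + 1) ((w : ℤ) - 1) x - x * geg (l + 1) ((w : ℤ) - 2) x) =
      (w - 1 + 2 * l) * S l w x := by
  rw [geg_sub_one _ (by positivity)]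
  cases w with
  | zero => simp [S, geg]
  | succ w =>
    have e : ((w + 1 : ℕ) : ℤ) - 2 = w - 1 := by push_cast; ring
    rw [e, geg_sub_one _ (by positivity)]
    obtain ⟨h3, h4⟩ := S_id l w x
    push_cast
    refine ⟨h3, ?_⟩
    rw [h4]; ring

/-- the scalar weight -/
noncomputable def rho (n : ℕ) (x : ℝ) : ℝ := (1 - x ^ 2) ^ ((n : ℝ) / 2 - 1)

lemma one_sub_sq_pos {x : ℝ} (hx : x ∈ Set.Ioo (-1 : ℝ) 1) : 0 < 1 - x ^ 2 := by
  nlinarith [hx.1, hx.2]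

lemma arcsin_int : IntervalIntegrable (fun x : ℝ => 1 / √(1 - x ^ 2)) MeasureTheory.volume (-1) 1 ∧
    ∫ x in (-1 : ℝ)..1, 1 / √(1 - x ^ 2) = Real.pi := by
  have hd : ∀ x ∈ Set.Ioo (-1 : ℝ) 1, HasDerivAt Real.arcsin (1 / √(1 - x ^ 2)) x := fun x hx =>
    Real.hasDerivAt_arcsin hx.1.ne' hx.2.ne
  have hi : IntervalIntegrable (fun x : ℝ => 1 / √(1 - x ^ 2)) MeasureTheory.volume (-1) 1 := by
    apply intervalIntegral.intervalIntegrable_deriv_of_nonneg (g := Real.arcsin)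
    · exact Real.continuous_arcsin.continuousOn
    · norm_num
      intro x h1 h2
      simpa using hd x ⟨h1, h2⟩
    · intro x _
      positivity
  refine ⟨hi, ?_⟩
  rw [intervalIntegral.integral_eq_sub_of_hasDerivAt_of_le (by norm_num)
    Real.continuous_arcsin.continuousOn hd hi]
  rw [Real.arcsin_one, Real.arcsin_neg_one]
  ring

lemma rho_int (n : ℕ) (hn : 1 ≤ n) : IntervalIntegrable (rho n) MeasureTheory.volume (-1) 1 := by
  have hn' : (1 : ℝ) ≤ n := by exact_mod_cast hn
  have hc : Continuous fun x : ℝ => (1 - x ^ 2) ^ (((n : ℝ) - 1) / 2) :=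
    Continuous.rpow_const (by fun_prop) (fun x => Or.inr (by linarith))
  have := arcsin_int.1.mul_continuousOn hc.continuousOn
  refine this.congr_uIoo ?_
  intro x hx
  rw [Set.uIoo_of_le (by norm_num)] at hx
  have h := one_sub_sq_pos hx
  simp only [rho]
  rw [Real.sqrt_eq_rpow, one_div, ← Real.rpow_neg h.le, ← Real.rpow_add h]
  congr 1
  ring

lemma rho_mul_int (n : ℕ) (hn : 1 ≤ n) (f : ℝ → ℝ) (hf : Continuous f) :
    IntervalIntegrable (fun x => rho n x * f x) MeasureTheory.volume (-1) 1 :=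
  (rho_int n hn).mul_continuousOn hf.continuousOn

lemma ibp (n : ℕ) (hn : 1 ≤ n) (f f' g : ℝ → ℝ) (hf : ∀ x, HasDerivAt f (f' x) x)
    (hg : Continuous g) (hfg : ∀ x, g x = (1 - x ^ 2) * f' x - n * x * f x) :
    ∫ x in (-1 : ℝ)..1, rho n x * g x = 0 := by
  have hn' : (1 : ℝ) ≤ n := by exact_mod_cast hn
  have hcf : Continuous f := continuous_iff_continuousAt.2 fun x => (hf x).continuousAt
  have hc : Continuous fun x : ℝ => (1 - x ^ 2) ^ ((n : ℝ) / 2) * f x :=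
    (Continuous.rpow_const (by fun_prop) (fun x => Or.inr (by linarith))).mul hcf
  rw [intervalIntegral.integral_eq_sub_of_hasDerivAt_of_le (by norm_num)
    (f := fun x : ℝ => (1 - x ^ 2) ^ ((n : ℝ) / 2) * f x) hc.continuousOn ?_
    (rho_mul_int n hn g hg)]
  · have : (n : ℝ) / 2 ≠ 0 := by linarith
    norm_num [Real.zero_rpow this]
  · intro x hx
    have h := one_sub_sq_pos hx
    have h1 : HasDerivAt (fun x : ℝ => 1 - x ^ 2) (-(2 * x)) x := by
      simpa using (hasDerivAt_pow 2 x).const_sub 1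
    have h2 := (h1.rpow_const (p := (n : ℝ) / 2) (Or.inl h.ne')).mul (hf x)
    refine h2.congr_deriv ?_
    have h3 : (1 - x ^ 2) ^ ((n : ℝ) / 2) = (1 - x ^ 2) ^ ((n : ℝ) / 2 - 1) * (1 - x ^ 2) := by
      rw [← Real.rpow_add_one h.ne']
      congr 1
      ring
    rw [h3, hfg]
    simp only [rho]
    ring

lemma rho_total (n : ℕ) : ∫ x in (-1 : ℝ)..1, rho (n + 1) x =
    √Real.pi * Real.Gamma (((n : ℝ) + 1) / 2) / Real.Gamma (((n : ℝ) + 2) / 2) := by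
  induction n using Nat.twoStepInduction with
  | zero =>
    have : ∫ x in (-1 : ℝ)..1, rho (0 + 1) x = ∫ x in (-1 : ℝ)..1, 1 / √(1 - x ^ 2) := by
      apply intervalIntegral.integral_congr_Ioo_of_le (by norm_num)
      intro x hx
      have h := one_sub_sq_pos hx
      simp only [rho]
      rw [Real.sqrt_eq_rpow, one_div, ← Real.rpow_neg h.le]
      congr 1
      norm_num
    rw [this, arcsin_int.2]
    norm_num [Real.Gamma_one_half_eq, -one_div]
    exact (Real.mul_self_sqrt Real.pi_pos.le).symm
  | one =>
    have : ∫ x in (-1 : ℝ)..1, rho (1 + 1) x = 2 := by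
      simp [rho]; norm_num
    rw [this]
    have h : Real.Gamma (((1 : ℕ) + 2 : ℝ) / 2) = 1 / 2 * √Real.pi := by
      rw [← Real.Gamma_one_half_eq, ← Real.Gamma_add_one (by norm_num)]
      norm_num
    rw [h]
    have : √Real.pi ≠ 0 := (Real.sqrt_pos.2 Real.pi_pos).ne'
    norm_num
    field_simp
  | more n ih _ =>
    have key := ibp (n + 1) (by omega) (fun x => x) (fun _ => 1)
      (fun x => (n + 2) * (1 - x ^ 2) - (n + 1)) (fun x => hasDerivAt_id x) (by fun_prop)
      (by intro x; push_cast; ring)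
    have e : ∫ x in (-1 : ℝ)..1, rho (n + 1) x * ((n + 2) * (1 - x ^ 2) - (n + 1)) =
        (n + 2) * (∫ x in (-1 : ℝ)..1, rho (n + 2 + 1) x) -
          (n + 1) * ∫ x in (-1 : ℝ)..1, rho (n + 1) x := by
      rw [← intervalIntegral.integral_const_mul, ← intervalIntegral.integral_const_mul,
        ← intervalIntegral.integral_sub]
      · apply intervalIntegral.integral_congr_Ioo_of_le (by norm_num)
        intro x hx
        have h := one_sub_sq_pos hx
        have : rho (n + 2 + 1) x = rho (n + 1) x * (1 - x ^ 2) := by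
          simp only [rho]
          rw [← Real.rpow_add_one h.ne']
          congr 1
          push_cast
          ring
        simp only [this]
        ring
      · exact (rho_int _ (by omega)).const_mul _
      · exact (rho_int _ (by omega)).const_mul _
    rw [e, ih] at key
    have g1 : Real.Gamma (((n + 2 : ℕ) + 1 : ℝ) / 2) =
        ((n : ℝ) + 1) / 2 * Real.Gamma (((n : ℝ) + 1) / 2) := by
      rw [← Real.Gamma_add_one (by positivity)]
      congr 1
      push_cast; ring
    have g2 : Real.Gamma (((n + 2 : ℕ) + 2 : ℝ) / 2) =
        ((n : ℝ) + 2) / 2 * Real.Gamma (((n : ℝ) + 2) / 2) := by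
      rw [← Real.Gamma_add_one (by positivity)]
      congr 1
      push_cast; ring
    rw [g1, g2]
    have h2 : (n : ℝ) + 2 ≠ 0 := by positivity
    have hG : Real.Gamma (((n : ℝ) + 2) / 2) ≠ 0 := (Real.Gamma_pos_of_pos (by positivity)).ne'
    apply mul_left_cancel₀ h2
    rw [sub_eq_zero.1 key]
    field_simp

/-- integral against the scalar weight -/
noncomputable def Jint (n : ℕ) (f : ℝ → ℝ) : ℝ := ∫ x in (-1 : ℝ)..1, rho n x * f x

lemma J_lin (n : ℕ) (hn : 1 ≤ n) (a b c : ℝ) (f g h k : ℝ → ℝ) (hf : Continuous f)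
    (hg : Continuous g) (hh : Continuous h) (hk : ∀ x, k x = a * f x + b * g x + c * h x) :
    Jint n k = a * Jint n f + b * Jint n g + c * Jint n h := by
  unfold Jint
  simp only [← intervalIntegral.integral_const_mul]
  rw [← intervalIntegral.integral_add, ← intervalIntegral.integral_add]
  · congr 1
    funext x
    rw [hk]
    ring
  · exact ((rho_mul_int n hn f hf).const_mul a).add ((rho_mul_int n hn g hg).const_mul b)
  · exact (rho_mul_int n hn h hh).const_mul c
  · exact (rho_mul_int n hn f hf).const_mul a
  · exact (rho_mul_int n hn g hg).const_mul b

lemma J_odd (n : ℕ) (f : ℝ → ℝ) (hf : ∀ x, f (-x) = - f x) : Jint n f = 0 := by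
  have h := intervalIntegral.integral_comp_neg (a := -1) (b := 1) (fun x => rho n x * f x)
  have e : ∀ x, rho n (-x) * f (-x) = - (rho n x * f x) := by
    intro x
    rw [hf]
    simp [rho]
  simp only [e, intervalIntegral.integral_neg, neg_neg] at h
  unfold Jint
  linarith

noncomputable def A (n : ℕ) (w : ℕ) : ℝ := Jint n fun x => S (((n : ℝ) + 1) / 2) w x ^ 2
noncomputable def B (n : ℕ) (w : ℕ) : ℝ :=
  Jint n fun x => x * S (((n : ℝ) + 1) / 2) (w + 1) x * S (((n : ℝ) + 1) / 2) w x
noncomputable def D (n : ℕ) (w : ℕ) : ℝ := Jint n fun x => x ^ 2 * S (((n : ℝ) + 1) / 2) (w + 1) x ^ 2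

lemma A_zero (n : ℕ) : A n 0 = 0 := by simp [A, S, Jint]
lemma B_zero (n : ℕ) : B n 0 = 0 := by simp [B, S, Jint]
lemma A_one (n : ℕ) : A n 1 = ∫ x in (-1 : ℝ)..1, rho n x := by simp [A, S, Jint]

lemma A_rec (n : ℕ) (hn : 1 ≤ n) (v : ℕ) :
    ((v : ℝ) + 1) * A n (v + 2) = (v + 1 + n) * A n (v + 1) := by
  set l := ((n : ℝ) + 1) / 2 with hl
  have hn2 : (n : ℝ) = 2 * l - 1 := by rw [hl]; ring
  have c1 := S_cont l (v + 1)
  have c2 := S_cont l (v + 2)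
  have key := ibp n hn (fun x => S l (v + 2) x * S l (v + 1) x) _
    (fun x => (v + 1 + n) * S l (v + 1) x ^ 2 - (v + 1) * S l (v + 2) x ^ 2)
    (fun x => (S_hasDeriv l (v + 1) x).2.mul (S_hasDeriv l v x).2) (by fun_prop) (by
      intro x
      have h1 := (S_ode l (v + 1) x).1
      have h2 := (S_ode l v x).2
      push_cast at h1
      rw [hn2]
      linear_combination -S l (v + 1) x * h1 - S l (v + 2) x * h2)
  have := J_lin n hn (v + 1 + n) (-(v + 1)) 0 (fun x => S l (v + 1) x ^ 2)
    (fun x => S l (v + 2) x ^ 2) (fun _ => 0)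
    (fun x => (v + 1 + n) * S l (v + 1) x ^ 2 - (v + 1) * S l (v + 2) x ^ 2)
    (by fun_prop) (by fun_prop) (by fun_prop) (by intro x; ring)
  have k2 : Jint n (fun x => (v + 1 + n) * S l (v + 1) x ^ 2 - (v + 1) * S l (v + 2) x ^ 2) = 0 := key
  rw [k2] at this
  unfold A
  rw [← hl]
  linarith

lemma D_rel (n : ℕ) (hn : 1 ≤ n) (w : ℕ) :
    A n (w + 1) + 2 * (w + n) * B n w = (n + 1 + 2 * w) * D n w ∧
    A n (w + 1) + (n + 1 + 2 * w) * D n w = 2 * (w + 1) * B n (w + 1) := by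
  set l := ((n : ℝ) + 1) / 2 with hl
  have hn2 : (n : ℝ) = 2 * l - 1 := by rw [hl]; ring
  have c1 := S_cont l w
  have c2 := S_cont l (w + 1)
  have c3 := S_cont l (w + 2)
  have hd : ∀ x, HasDerivAt (fun x => x * (S l (w + 1) x * S l (w + 1) x)) _ x :=
    fun x => (hasDerivAt_id x).mul ((S_hasDeriv l w x).2.mul (S_hasDeriv l w x).2)
  constructor
  · have key := ibp n hn _ _
      (fun x => 1 * S l (w + 1) x ^ 2 + (2 * (w + n)) * (x * S l (w + 1) x * S l w x)
        + (-(n + 1 + 2 * w)) * (x ^ 2 * S l (w + 1) x ^ 2)) hd (by fun_prop) (by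
      intro x
      have h1 := (S_ode l w x).1
      simp only [id]
      rw [hn2]
      linear_combination - 2 * x * S l (w + 1) x * h1)
    have := J_lin n hn 1 (2 * (w + n)) (-(n + 1 + 2 * w)) (fun x => S l (w + 1) x ^ 2)
      (fun x => x * S l (w + 1) x * S l w x) (fun x => x ^ 2 * S l (w + 1) x ^ 2) _
      (by fun_prop) (by fun_prop) (by fun_prop) (fun x => rfl)
    unfold A B D
    rw [← hl]
    unfold Jint at *
    rw [key] at this
    linarith
  · have key := ibp n hn _ _
      (fun x => 1 * S l (w + 1) x ^ 2 + (-(2 * (w + 1))) * (x * S l (w + 2) x * S l (w + 1) x)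
        + (n + 1 + 2 * w) * (x ^ 2 * S l (w + 1) x ^ 2)) hd (by fun_prop) (by
      intro x
      have h1 := (S_ode l w x).2
      simp only [id]
      rw [hn2]
      linear_combination - 2 * x * S l (w + 1) x * h1)
    have := J_lin n hn 1 (-(2 * (w + 1))) (n + 1 + 2 * w) (fun x => S l (w + 1) x ^ 2)
      (fun x => x * S l (w + 2) x * S l (w + 1) x) (fun x => x ^ 2 * S l (w + 1) x ^ 2) _
      (by fun_prop) (by fun_prop) (by fun_prop) (fun x => rfl)
    unfold A B D
    rw [← hl]
    unfold Jint at *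
    rw [key] at this
    linarith

lemma B_eq (n : ℕ) (hn : 1 ≤ n) (w : ℕ) : B n w = A n w := by
  induction w with
  | zero => rw [A_zero, B_zero]
  | succ w ih =>
    obtain ⟨h1, h2⟩ := D_rel n hn w
    have hA : (w : ℝ) * A n (w + 1) = (w + n) * A n w := by
      cases w with
      | zero => simp [A_zero]
      | succ v => exact_mod_cast A_rec n hn v
    rw [ih] at h1
    have : (w : ℝ) + 1 ≠ 0 := by positivity
    apply mul_left_cancel₀ this
    linarith

lemma A_rel (n : ℕ) (hn : 1 ≤ n) (w : ℕ) : (w : ℝ) * A n (w + 1) = (w + n) * A n w := by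
  cases w with
  | zero => simp [A_zero]
  | succ v => exact_mod_cast A_rec n hn v

lemma A_val (n : ℕ) (hn : 1 ≤ n) (w : ℕ) : A n (w + 1) = poch (n + 1) w / w.factorial *
    (√Real.pi * Real.Gamma ((n : ℝ) / 2) / Real.Gamma (((n : ℝ) + 1) / 2)) := by
  induction w with
  | zero =>
    rw [zero_add, A_one]
    obtain ⟨m, rfl⟩ : ∃ m, n = m + 1 := ⟨n - 1, by omega⟩
    rw [rho_total]
    simp only [poch_zero, Nat.factorial]
    push_cast
    have : (m : ℝ) + 1 + 1 = m + 2 := by ring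
    rw [this]
    simp
  | succ w ih =>
    have h := A_rec n hn w
    rw [ih] at h
    have h1 : (w : ℝ) + 1 ≠ 0 := by positivity
    apply mul_left_cancel₀ h1
    show ((w : ℝ) + 1) * A n (w + 2) = _
    rw [h, poch_succ, Nat.factorial_succ]
    push_cast
    field_simp
    ring

lemma prod_eq (n : ℕ) (w : ℕ) : 2 ^ (w / 2) * Real.Gamma ((n : ℝ) / 2 + 1 + (w / 2 : ℕ)) *
            ∏ k ∈ Finset.range ((w + 1) / 2), ((n : ℝ) + 2 * k + 1) =
     poch (n + 1) w * Real.Gamma ((n : ℝ) / 2 + 1) := by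
  have key : ∀ m : ℕ, 2 ^ m * Real.Gamma ((n : ℝ) / 2 + 1 + m) *
      (∏ k ∈ Finset.range m, ((n : ℝ) + 2 * k + 1)) =
      poch (n + 1) (2 * m) * Real.Gamma ((n : ℝ) / 2 + 1) := by
    intro m
    induction m with
    | zero => simp [poch_zero]
    | succ m ih =>
      rw [Finset.prod_range_succ]
      have e : 2 * (m + 1) = 2 * m + 1 + 1 := by ring
      have g : Real.Gamma ((n : ℝ) / 2 + 1 + (m + 1 : ℕ)) =
        ((n : ℝ) / 2 + 1 + m) * Real.Gamma ((n : ℝ) / 2 + 1 + m) := by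
        rw [← Real.Gamma_add_one (by positivity)]
        congr 1
        push_cast; ring
      rw [e, poch_succ, poch_succ, g, pow_succ]
      push_cast
      linear_combination ((n : ℝ) + 1 + 2 * m) * ((n : ℝ) + 1 + (2 * m + 1)) * ih
  rcases Nat.even_or_odd' w with ⟨m, rfl | rfl⟩
  · have e1 : 2 * m / 2 = m := by omega
    have e2 : (2 * m + 1) / 2 = m := by omega
    rw [e1, e2, key]
  · have e1 : (2 * m + 1) / 2 = m := by omega
    have e2 : (2 * m + 1 + 1) / 2 = m + 1 := by omega
    rw [e1, e2, Finset.prod_range_succ, poch_succ]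
    push_cast
    linear_combination ((n : ℝ) + 1 + 2 * m) * key m

/-- The constant in the statement. -/
lemma const_eq (n : ℕ) (hn : 1 ≤ n) (w : ℕ) :
    (√Real.pi * 2 ^ (w / 2) * Real.Gamma ((n : ℝ) / 2 + 1 + (w / 2 : ℕ)) *
            ∏ k ∈ Finset.range ((w + 1) / 2), ((n : ℝ) + 2 * k + 1)) /
          ((w.factorial : ℝ) * ((n : ℝ) + 1) * ((n : ℝ) + 2 * w + 1) *
            Real.Gamma ((n : ℝ) / 2 + 3 / 2)) =
      n / ((n + 1) ^ 2 * (n + 2 * w + 1)) * A n (w + 1) := by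
  have hn' : (0 : ℝ) < n := by exact_mod_cast hn
  have h := prod_eq n w
  have h' : √Real.pi * 2 ^ (w / 2) * Real.Gamma ((n : ℝ) / 2 + 1 + (w / 2 : ℕ)) *
            ∏ k ∈ Finset.range ((w + 1) / 2), ((n : ℝ) + 2 * k + 1) =
      √Real.pi * (poch (n + 1) w * Real.Gamma ((n : ℝ) / 2 + 1)) := by
    rw [← h]; ring
  have g1 : Real.Gamma ((n : ℝ) / 2 + 1) = n / 2 * Real.Gamma ((n : ℝ) / 2) :=
    Real.Gamma_add_one (by positivity)
  have g2 : Real.Gamma ((n : ℝ) / 2 + 3 / 2) = (n + 1) / 2 * Real.Gamma (((n : ℝ) + 1) / 2) := by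
    rw [← Real.Gamma_add_one (by positivity)]
    congr 1
    ring
  have hG : Real.Gamma (((n : ℝ) + 1) / 2) ≠ 0 := (Real.Gamma_pos_of_pos (by positivity)).ne'
  rw [h', A_val n hn, g1, g2]
  have h3 : (n : ℝ) + 2 * w + 1 ≠ 0 := by positivity
  have h4 : (w.factorial : ℝ) ≠ 0 := by positivity
  field_simp

lemma const_pos (n : ℕ) (hn : 1 ≤ n) (w : ℕ) :
    0 < (√Real.pi * 2 ^ (w / 2) * Real.Gamma ((n : ℝ) / 2 + 1 + (w / 2 : ℕ)) *
            ∏ k ∈ Finset.range ((w + 1) / 2), ((n : ℝ) + 2 * k + 1)) /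
          ((w.factorial : ℝ) * ((n : ℝ) + 1) * ((n : ℝ) + 2 * w + 1) *
            Real.Gamma ((n : ℝ) / 2 + 3 / 2)) := by
  have h1 : 0 < Real.Gamma ((n : ℝ) / 2 + 1 + (w / 2 : ℕ)) := Real.Gamma_pos_of_pos (by positivity)
  have h2 : 0 < Real.Gamma ((n : ℝ) / 2 + 3 / 2) := Real.Gamma_pos_of_pos (by positivity)
  have h3 : 0 < √Real.pi := Real.sqrt_pos.2 Real.pi_pos
  have h4 : 0 < ∏ k ∈ Finset.range ((w + 1) / 2), ((n : ℝ) + 2 * k + 1) :=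
    Finset.prod_pos fun k _ => by positivity
  positivity

/-- The diagonal entries. -/
lemma diag_entry (n : ℕ) (hn : 1 ≤ n) (w : ℕ) (q : ℝ) (hq : 0 < q) (k : ℝ → ℝ)
    (hk : ∀ x, k x = (n - q) * (q / ((n + 1) * (q + w)) * S (((n : ℝ) + 1) / 2) (w + 1) x) ^ 2 +
      q * (1 / (n + 1) * (x * S (((n : ℝ) + 1) / 2) (w + 1) x -
        (w + n) / (q + w) * S (((n : ℝ) + 1) / 2) w x)) ^ 2) :
    Jint n k = n / ((n + 1) ^ 2 * (n + 2 * w + 1)) * A n (w + 1) * (q * (n - q + w + 1) / (q + w)) := by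
  have hn' : (0 : ℝ) < n := by exact_mod_cast hn
  set l := ((n : ℝ) + 1) / 2 with hl
  have c1 := S_cont l w
  have c2 := S_cont l (w + 1)
  have hqw : q + w ≠ 0 := by positivity
  have hnw : (n : ℝ) + 2 * w + 1 ≠ 0 := by positivity
  have hwn : (w : ℝ) + n ≠ 0 := by positivity
  have hn1 : (n : ℝ) + 1 ≠ 0 := by positivity
  have s1 := J_lin n hn (q / (n + 1) ^ 2) (- 2 * q * (w + n) / ((n + 1) ^ 2 * (q + w)))
    (q * (w + n) ^ 2 / ((n + 1) ^ 2 * (q + w) ^ 2))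
    (fun x => x ^ 2 * S l (w + 1) x ^ 2)
    (fun x => x * S l (w + 1) x * S l w x) (fun x => S l w x ^ 2) _
      (by fun_prop) (by fun_prop) (by fun_prop) (fun x => rfl)
  have s2 := J_lin n hn 1 ((n - q) * q ^ 2 / ((n + 1) ^ 2 * (q + w) ^ 2)) 0 _
    (fun x => S l (w + 1) x ^ 2) (fun _ => 0) k (by
      show Continuous fun x => (q / (n + 1) ^ 2) * (x ^ 2 * S l (w + 1) x ^ 2) +
        (- 2 * q * (w + n) / ((n + 1) ^ 2 * (q + w))) * (x * S l (w + 1) x * S l w x) +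
        (q * (w + n) ^ 2 / ((n + 1) ^ 2 * (q + w) ^ 2)) * S l w x ^ 2
      fun_prop) (by fun_prop) (by fun_prop) (by
      intro x
      rw [hk]
      field_simp
      ring)
  rw [s1] at s2
  have hA : A n (w + 1) = Jint n fun x => S l (w + 1) x ^ 2 := rfl
  have hA' : A n w = Jint n fun x => S l w x ^ 2 := rfl
  have hB' : B n w = Jint n fun x => x * S l (w + 1) x * S l w x := rfl
  have hD' : D n w = Jint n fun x => x ^ 2 * S l (w + 1) x ^ 2 := rfl
  rw [← hA, ← hA', ← hB', ← hD', B_eq n hn] at s2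
  have r1 := A_rel n hn w
  have r2 := (D_rel n hn w).1
  rw [B_eq n hn] at r2
  have r1' : A n w = w * A n (w + 1) / (w + n) := by
    field_simp
    linarith
  have r2' : D n w = (1 + 2 * w) * A n (w + 1) / (n + 2 * w + 1) := by
    field_simp
    linarith
  rw [s2, r1', r2']
  generalize A n (w + 1) = a
  field_simp
  ring

lemma P_forms (n : ℕ) (w : ℕ) (q : ℝ) (hq : 0 < q) (x : ℝ) :
    (1 / ((n : ℝ) + 1) * geg (((n : ℝ) + 1) / 2) (w : ℤ) x +
        1 / (q + w) * geg (((n : ℝ) + 3) / 2) ((w : ℤ) - 2) x) -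
      x * (1 / (q + w) * geg (((n : ℝ) + 3) / 2) ((w : ℤ) - 1) x) =
      q / ((n + 1) * (q + w)) * S (((n : ℝ) + 1) / 2) (w + 1) x ∧
    x * (1 / ((n : ℝ) + 1) * geg (((n : ℝ) + 1) / 2) (w : ℤ) x +
        1 / (q + w) * geg (((n : ℝ) + 3) / 2) ((w : ℤ) - 2) x) -
      (1 / (q + w) * geg (((n : ℝ) + 3) / 2) ((w : ℤ) - 1) x) =
      1 / (n + 1) * (x * S (((n : ℝ) + 1) / 2) (w + 1) x -
        (w + n) / (q + w) * S (((n : ℝ) + 1) / 2) w x) := by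
  have hl : 0 < ((n : ℝ) + 1) / 2 := by positivity
  have e : ((n : ℝ) + 3) / 2 = ((n : ℝ) + 1) / 2 + 1 := by ring
  rw [(geg_eq_S _ hl w x).1, e]
  obtain ⟨h1, h2⟩ := geg_id _ hl w x
  have hqw : q + w ≠ 0 := by positivity
  have hn1 : (n : ℝ) + 1 ≠ 0 := by positivity
  generalize geg (((n : ℝ) + 1) / 2 + 1) ((w : ℤ) - 1) x = g1 at *
  generalize geg (((n : ℝ) + 1) / 2 + 1) ((w : ℤ) - 2) x = g2 at *
  generalize S (((n : ℝ) + 1) / 2) (w + 1) x = s1 at *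
  generalize S (((n : ℝ) + 1) / 2) w x = s2 at *
  constructor
  · field_simp
    linear_combination -h1
  · field_simp
    linear_combination -h2

lemma entry (n : ℕ) (p : ℝ) (w : ℕ) (x : ℝ) (a b : Fin 2) :
    (Pmat n p w x * Wmat n p x * (Pmat n p w x)ᵀ) a b = rho n x *
      ((n - p) * (Pmat n p w x a 0 - x * Pmat n p w x a 1) *
        (Pmat n p w x b 0 - x * Pmat n p w x b 1) +
      p * (x * Pmat n p w x a 0 - Pmat n p w x a 1) *
        (x * Pmat n p w x b 0 - Pmat n p w x b 1)) := by
  simp only [Matrix.mul_apply, Fin.sum_univ_two, Matrix.transpose_apply, Wmat, rho,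
    Matrix.smul_apply, smul_eq_mul]
  generalize Pmat n p w x = P
  simp
  ring

lemma main_eq (n : ℕ) (hn : 1 ≤ n) (p : ℝ) (hp : 0 < p) (hpn : p < n) (w : ℕ) :
    (Matrix.of fun a b : Fin 2 =>
        ∫ x in (-1 : ℝ)..1, (Pmat n p w x * Wmat n p x * (Pmat n p w x)ᵀ) a b) =
      (n / ((n + 1) ^ 2 * (n + 2 * w + 1)) * A n (w + 1)) •
        Matrix.diagonal ![p * ((n : ℝ) - p + w + 1) / (p + w),
          ((n : ℝ) - p) * (p + w + 1) / ((n : ℝ) - p + w)] := by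
  have hq : 0 < (n : ℝ) - p := by linarith
  set l := ((n : ℝ) + 1) / 2 with hl
  have u1 : ∀ x, Pmat n p w x 0 0 - x * Pmat n p w x 0 1 = _ := fun x => (P_forms n w p hp x).1
  have v1 : ∀ x, x * Pmat n p w x 0 0 - Pmat n p w x 0 1 = _ := fun x => (P_forms n w p hp x).2
  have v2 : ∀ x, Pmat n p w x 1 1 - x * Pmat n p w x 1 0 = _ :=
    fun x => (P_forms n w (n - p) hq x).1
  have u2 : ∀ x, x * Pmat n p w x 1 1 - Pmat n p w x 1 0 = _ :=
    fun x => (P_forms n w (n - p) hq x).2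
  have u2' : ∀ x, Pmat n p w x 1 0 - x * Pmat n p w x 1 1 =
      -(1 / (n + 1) * (x * S (((n : ℝ) + 1) / 2) (w + 1) x -
        (w + n) / (n - p + w) * S (((n : ℝ) + 1) / 2) w x)) :=
    fun x => by linear_combination -u2 x
  have v2' : ∀ x, x * Pmat n p w x 1 0 - Pmat n p w x 1 1 =
      -((n - p) / ((n + 1) * (n - p + w)) * S (((n : ℝ) + 1) / 2) (w + 1) x) :=
    fun x => by linear_combination -v2 x
  simp only [← hl] at u1 v1 u2' v2'
  have off : ∀ a b c d e f : ℝ, Jint n (fun x => a * S l (w + 1) x * (b * (x * S l (w + 1) x -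
     c * S l w x)) + d * S l (w + 1) x * (e * (x * S l (w + 1) x - f * S l w x))) = 0 := by
    intro a b c d e f
    apply J_odd
    intro x
    obtain ⟨h1, h2⟩ := S_parity l w x
    rw [h1, h2]
    have : ((-1 : ℝ) ^ w) * (-1) ^ w = 1 := by rw [← mul_pow]; norm_num
    generalize ((-1 : ℝ) ^ w) = s at *
    linear_combination (-(a * S l (w + 1) x * (b * (x * S l (w + 1) x -
     c * S l w x)) + d * S l (w + 1) x * (e * (x * S l (w + 1) x - f * S l w x)))) * this
  ext a b
  simp only [Matrix.of_apply, entry]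
  fin_cases a <;> fin_cases b
  · simp only [Fin.zero_eta, u1, v1]
    refine (diag_entry n hn w p hp _ ?_).trans ?_
    · intro x
      rw [← hl]; ring
    · simp
  · simp only [Fin.zero_eta, Fin.mk_one, u1, v1, u2', v2']
    refine Eq.trans ?_ ((off (-(n - p) * (p / ((n + 1) * (p + w)))) (1 / (n + 1))
      ((w + n) / (n - p + w)) (-p * ((n - p) / ((n + 1) * (n - p + w)))) (1 / (n + 1))
      ((w + n) / (p + w))).trans ?_)
    · unfold Jint
      congr 1
      funext x
      ring
    · simp
  · simp only [Fin.zero_eta, Fin.mk_one, u1, v1, u2', v2']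
    refine Eq.trans ?_ ((off (-(n - p) * (p / ((n + 1) * (p + w)))) (1 / (n + 1))
      ((w + n) / (n - p + w)) (-p * ((n - p) / ((n + 1) * (n - p + w)))) (1 / (n + 1))
      ((w + n) / (p + w))).trans ?_)
    · unfold Jint
      congr 1
      funext x
      ring
    · simp
  · simp only [Fin.mk_one, u2', v2']
    refine (diag_entry n hn w (n - p) hq _ ?_).trans ?_
    · intro x
      rw [← hl]; ring
    · simp

/-- `∫_{-1}^{1} P_w W_{p,n} P_w^T dx` equals the stated diagonal matrix, which is
positive definite. -/
theorem stmt_4 (n : ℕ) (hn : 1 ≤ n) (p : ℝ) (hp : 0 < p) (hpn : p < n) (w : ℕ) :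
    (Matrix.of fun a b : Fin 2 =>
        ∫ x in (-1 : ℝ)..1, (Pmat n p w x * Wmat n p x * (Pmat n p w x)ᵀ) a b) =
      ((Real.sqrt Real.pi * 2 ^ (w / 2) * Real.Gamma ((n : ℝ) / 2 + 1 + (w / 2 : ℕ)) *
            ∏ k ∈ Finset.range ((w + 1) / 2), ((n : ℝ) + 2 * k + 1)) /
          ((w.factorial : ℝ) * ((n : ℝ) + 1) * ((n : ℝ) + 2 * w + 1) *
            Real.Gamma ((n : ℝ) / 2 + 3 / 2))) •
        Matrix.diagonal ![p * ((n : ℝ) - p + w + 1) / (p + w),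
          ((n : ℝ) - p) * (p + w + 1) / ((n : ℝ) - p + w)] ∧
    (Matrix.of fun a b : Fin 2 =>
        ∫ x in (-1 : ℝ)..1, (Pmat n p w x * Wmat n p x * (Pmat n p w x)ᵀ) a b).PosDef := by
  rw [main_eq n hn p hp hpn w, ← const_eq n hn w]
  refine ⟨rfl, ?_⟩
  have hq : 0 < (n : ℝ) - p := by linarith
  refine Matrix.PosDef.smul ?_ (const_pos n hn w)
  rw [Matrix.posDef_diagonal_iff]
  intro i
  fin_cases i
  · simp; positivity
  · simp; positivity
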